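/- Suppose the GI/G/1-type Markov chain is irreducible, aperiodic and positive recurrent and the phase matrix A is stochastic. If the set Ω = {z ∈ ℂ : 1 < |z| < φ_{A+} and det(I − A*(z)) = 0} is nonempty, then there exists a positive real number z0 ∈ Ω such that z0 ≤ |z| for every z ∈ Ω. -/

import Mathlib

open Filter Topology
open scoped ENNReal NNReal BigOperators

namespace GIG1

/-- The state space of a `GI/G/1`-type Markov chain: level `i : ℕ`, phase `j : Fin m`. -/
abbrev S (m : ℕ) := ℕ × Fin m

/-- The transition kernel of the `GI/G/1`-type Markov chain with matrix blocks `A, B`. -/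
noncomputable def P {m : ℕ} (A B : ℤ → Matrix (Fin m) (Fin m) ℝ) : S m → S m → ℝ
  | (0, j), (k, s) => B (k : ℤ) j s
  | (i + 1, j), (0, s) => B (-(i + 1 : ℤ)) j s
  | (i + 1, j), (k + 1, s) => A ((k : ℤ) - (i : ℤ)) j s

/-- `n`-step transition probabilities. -/
noncomputable def Pn {m : ℕ} (P : S m → S m → ℝ) : ℕ → S m → S m → ℝ
  | 0, x, y => if x = y then 1 else 0
  | n + 1, x, y => ∑' z : S m, P x z * Pn P n z y

def Stochastic {m : ℕ} (P : S m → S m → ℝ) : Prop :=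
  (∀ x y, 0 ≤ P x y) ∧ ∀ x, HasSum (P x) 1

def ChainIrreducible {m : ℕ} (P : S m → S m → ℝ) : Prop :=
  ∀ x y, ∃ n, 1 ≤ n ∧ 0 < Pn P n x y

def ChainAperiodic {m : ℕ} (P : S m → S m → ℝ) : Prop :=
  ∀ x, ∃ N, ∀ n ≥ N, 0 < Pn P n x x

/-- `pd` is a stationary probability distribution of `P`; for an irreducible aperiodic chain
this is equivalent to positive recurrence. -/
def IsStationary {m : ℕ} (P : S m → S m → ℝ) (pd : S m → ℝ) : Prop :=
  (∀ x, 0 ≤ pd x) ∧ HasSum pd 1 ∧ ∀ y, HasSum (fun x => pd x * P x y) (pd y)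

/-- The phase matrix `A = ∑ₖ Aₖ`. -/
noncomputable def matA {m : ℕ} (A : ℤ → Matrix (Fin m) (Fin m) ℝ) : Matrix (Fin m) (Fin m) ℝ :=
  Matrix.of fun r s => ∑' k : ℤ, A k r s

/-- The phase matrix `A = ∑ₖ Aₖ` is stochastic. -/
def PhaseStochastic {m : ℕ} (A : ℤ → Matrix (Fin m) (Fin m) ℝ) : Prop :=
  ∀ r, HasSum (fun p : ℤ × Fin m => A p.1 r p.2) 1

/-- Irreducibility of a nonnegative matrix. -/
def MatIrreducible {m : ℕ} (M : Matrix (Fin m) (Fin m) ℝ) : Prop :=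
  ∀ r s, ∃ n, 1 ≤ n ∧ 0 < (M ^ n) r s

/-- Radius of convergence of a power series with nonnegative coefficients. -/
noncomputable def radius (c : ℕ → ℝ) : ℝ≥0∞ :=
  ⨆ (r : ℝ≥0) (_ : Summable fun k => c k * (r : ℝ) ^ k), (r : ℝ≥0∞)

/-- `φ_{A+}`: the minimum over entries of the radii of convergence of `∑_{k ≥ 1} A_k(r,s) z^k`. -/
noncomputable def phiA {m : ℕ} (A : ℤ → Matrix (Fin m) (Fin m) ℝ) : ℝ≥0∞ :=
  ⨅ (r : Fin m) (s : Fin m), radius fun k => A ((k : ℤ) + 1) r s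

/-- `φ_{B+}`. -/
noncomputable def phiB {m : ℕ} (B : ℤ → Matrix (Fin m) (Fin m) ℝ) : ℝ≥0∞ :=
  ⨅ (r : Fin m) (s : Fin m), radius fun k => B ((k : ℤ) + 1) r s

/-- The matrix sequence `{C_k}_{k ≥ 1}` is light-tailed. -/
def LightMat {m : ℕ} (C : ℤ → Matrix (Fin m) (Fin m) ℝ) : Prop :=
  ∀ r s, ∃ ε > (0 : ℝ),
    Summable fun k : ℕ => C ((k : ℤ) + 1) r s * Real.exp (ε * ((k : ℝ) + 1))

/-- `A^*(z) = ∑_{k ∈ ℤ} z^k A_k` for complex `z`. -/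
noncomputable def AstarC {m : ℕ} (A : ℤ → Matrix (Fin m) (Fin m) ℝ) (z : ℂ) :
    Matrix (Fin m) (Fin m) ℂ :=
  Matrix.of fun r s => ∑' k : ℤ, (A k r s : ℂ) * z ^ k

/-- `A^*(z) = ∑_{k ∈ ℤ} z^k A_k` for real `z`. -/
noncomputable def AstarR {m : ℕ} (A : ℤ → Matrix (Fin m) (Fin m) ℝ) (z : ℝ) :
    Matrix (Fin m) (Fin m) ℝ :=
  Matrix.of fun r s => ∑' k : ℤ, A k r s * z ^ k

/-- The set `Ω = {z ∈ ℂ : 1 < |z| < φ_{A+}, det(I - A^*(z)) = 0}`. -/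
def Omega {m : ℕ} (A : ℤ → Matrix (Fin m) (Fin m) ℝ) : Set ℂ :=
  {z | 1 < ‖z‖ ∧ ENNReal.ofReal ‖z‖ < phiA A ∧ (1 - AstarC A z).det = 0}

/-- `η`: the minimal modulus of an element of `Ω`, or `∞` when `Ω = ∅`. -/
noncomputable def eta {m : ℕ} (A : ℤ → Matrix (Fin m) (Fin m) ℝ) : ℝ≥0∞ :=
  sInf ((fun z : ℂ => ENNReal.ofReal ‖z‖) '' Omega A)

/-- The largest (Perron–Frobenius) eigenvalue of a nonnegative matrix. -/
noncomputable def chi {m : ℕ} (M : Matrix (Fin m) (Fin m) ℝ) : ℝ :=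
  sSup {r : ℝ | ∃ v : Fin m → ℝ, v ≠ 0 ∧ M.mulVec v = r • v}

/-!
Near `1` on the right, `A*(x)` strictly decreases some positive vector. This reflects negative mean
drift of the level: otherwise the level, corrected by a solution of the Poisson equation of the
phase process, would be subharmonic away from level `0`, which an irreducible chain with a
stationary distribution forbids. Downward jumps need not have a finite mean, so they are first cut
off at a large `-N`. At the first `c > 1` where no positive vector is decreased any more,
`det(I - A*(c)) = 0`. Since `|A*(z)| ≤ A*(|z|)` entrywise, `I - A*(z)` is invertible whenever
`1 < |z| < c`.
-/

open scoped Matrix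

section Subcritical

variable {ι : Type*} [Fintype ι] {M : Matrix ι ι ℝ}

/-- A real matrix is subcritical if it strictly decreases some positive vector. For entrywise
nonnegative matrices this says that the spectral radius is less than `1`. -/
def Subcritical (M : Matrix ι ι ℝ) : Prop :=
  ∃ v : ι → ℝ, (∀ i, 0 < v i) ∧ ∀ i, (M *ᵥ v) i < v i

theorem mulVec_mono_of_nonneg (hM : ∀ i j, 0 ≤ M i j) {u v : ι → ℝ} (huv : u ≤ v) :
    M *ᵥ u ≤ M *ᵥ v :=
  fun i => dotProduct_le_dotProduct_of_nonneg_left huv (hM i)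

theorem Subcritical.mono {M' : Matrix ι ι ℝ} (hM' : Subcritical M')
    (hle : ∀ i j, M i j ≤ M' i j) : Subcritical M := by
  obtain ⟨v, hv, hMv⟩ := hM'
  exact ⟨v, hv, fun i => lt_of_le_of_lt
    (dotProduct_le_dotProduct_of_nonneg_right (hle i) fun j => (hv j).le) (hMv i)⟩

-- At an index minimising `y i / v i`, a negative minimum would contradict `M v < v`.
theorem Subcritical.nonneg_of_mulVec_le (hM : Subcritical M) (hM₀ : ∀ i j, 0 ≤ M i j)
    {y : ι → ℝ} (hy : M *ᵥ y ≤ y) : 0 ≤ y := by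
  obtain ⟨v, hv, hMv⟩ := hM
  intro i
  have : Nonempty ι := ⟨i⟩
  obtain ⟨r, hr⟩ := Finite.exists_min fun j => y j / v j
  set c := y r / v r
  have hcv : c • v ≤ y := fun j => (le_div_iff₀ (hv j)).1 (hr j)
  have hyr : y r = c * v r := (div_mul_cancel₀ _ (hv r).ne').symm
  have hc₀ : 0 ≤ c := by
    by_contra! hneg
    have hMcv : c * (M *ᵥ v) r ≤ (M *ᵥ y) r := by
      have hr := mulVec_mono_of_nonneg hM₀ hcv r
      rwa [Matrix.mulVec_smul] at hr
    linarith [hy r, mul_lt_mul_of_neg_left (hMv r) hneg]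
  exact (mul_nonneg hc₀ (hv i).le).trans (hcv i)

theorem Subcritical.eventually {X : Type*} {l : Filter X} {F : X → Matrix ι ι ℝ}
    (hM : Subcritical M) (hF : Tendsto F l (𝓝 M)) : ∀ᶠ x in l, Subcritical (F x) := by
  obtain ⟨v, hv, hMv⟩ := hM
  have hFv : Tendsto (fun x => F x *ᵥ v) l (𝓝 (M *ᵥ v)) :=
    ((continuous_id.matrix_mulVec continuous_const).tendsto M).comp hF
  have hlt : ∀ i, ∀ᶠ x in l, (F x *ᵥ v) i < v i := fun i =>
    (tendsto_pi_nhds.1 hFv i).eventually_lt_const (hMv i)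
  filter_upwards [eventually_all.2 hlt] with x hx using ⟨v, hv, hx⟩

theorem eventually_lt_of_hasDerivWithinAt_Ioi_neg {f : ℝ → ℝ} {f' a : ℝ}
    (hf : HasDerivWithinAt f f' (Set.Ioi a) a) (hf' : f' < 0) : ∀ᶠ x in 𝓝[>] a, f x < f a := by
  have hslope := (hasDerivWithinAt_iff_tendsto_slope' Set.self_notMem_Ioi).1 hf
  filter_upwards [hslope.eventually_lt_const hf', self_mem_nhdsWithin] with x hx hax
  rw [slope_def_field, div_neg_iff] at hx
  have : 0 < x - a := sub_pos.2 hax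
  rcases hx with ⟨-, h⟩ | ⟨h, -⟩ <;> linarith

-- The perturbed vectors `1 + (x - a) h` witness subcriticality to first order in `x - a`.
theorem eventually_subcritical_of_hasDerivWithinAt {F : ℝ → Matrix ι ι ℝ} {F' : Matrix ι ι ℝ}
    {a : ℝ} (hF : ∀ i j, HasDerivWithinAt (fun x => F x i j) (F' i j) (Set.Ioi a) a)
    (hFa : F a *ᵥ 1 = 1) (h : ι → ℝ) (hneg : ∀ i, (F' *ᵥ 1 + F a *ᵥ h - h) i < 0) :
    ∀ᶠ x in 𝓝[>] a, Subcritical (F x) := by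
  set v : ℝ → ι → ℝ := fun x i => 1 + (x - a) * h i
  have hva : v a = 1 := by ext i; simp [v]
  have hv' : ∀ i, HasDerivWithinAt (fun x => v x i) (h i) (Set.Ioi a) a := fun i =>
    (((((hasDerivAt_id a).sub_const a).mul_const (h i)).const_add 1).congr_deriv
      (one_mul _)).hasDerivWithinAt
  have hdiff : ∀ i, HasDerivWithinAt (fun x => (F x *ᵥ v x) i - v x i)
      ((F' *ᵥ 1 + F a *ᵥ h - h) i) (Set.Ioi a) a := by
    intro i
    refine ((HasDerivWithinAt.fun_sum fun j _ => (hF i j).mul (hv' j)).sub (hv' i)).congr_deriv ?_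
    simp [hva, Matrix.mulVec, dotProduct, Finset.sum_add_distrib]
  have hlt : ∀ i, ∀ᶠ x in 𝓝[>] a, (F x *ᵥ v x) i - v x i < 0 := fun i => by
    simpa [hva, hFa] using eventually_lt_of_hasDerivWithinAt_Ioi_neg (hdiff i) (hneg i)
  have hpos : ∀ i, ∀ᶠ x in 𝓝[>] a, 0 < v x i := fun i =>
    (hv' i).continuousWithinAt.eventually_const_lt (by simp [hva])
  filter_upwards [eventually_all.2 hlt, eventually_all.2 hpos] with x hx hx₀
  exact ⟨v x, hx₀, fun i => sub_neg.1 (hx i)⟩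

variable [DecidableEq ι]

theorem Subcritical.det_one_sub_ne_zero {𝕜 : Type*} [NormedField 𝕜] (hM : Subcritical M)
    {Z : Matrix ι ι 𝕜} (hZ : ∀ i j, ‖Z i j‖ ≤ M i j) : (1 - Z).det ≠ 0 := by
  intro hdet
  obtain ⟨w, hw, hZw⟩ := Matrix.exists_mulVec_eq_zero_iff.2 hdet
  rw [Matrix.sub_mulVec, Matrix.one_mulVec, sub_eq_zero] at hZw
  have hnorm : (fun i => ‖w i‖) ≤ M *ᵥ fun i => ‖w i‖ := fun i =>
    calc ‖w i‖ = ‖∑ j, Z i j * w j‖ := congrArg norm (congrFun hZw i)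
      _ ≤ ∑ j, ‖Z i j‖ * ‖w j‖ := (norm_sum_le _ _).trans_eq (by simp only [norm_mul])
      _ ≤ ∑ j, M i j * ‖w j‖ := by gcongr with j; exact hZ i j
  have hneg : 0 ≤ -fun i => ‖w i‖ :=
    hM.nonneg_of_mulVec_le (fun i j => (norm_nonneg _).trans (hZ i j)) <| by
      rw [Matrix.mulVec_neg]
      exact neg_le_neg hnorm
  exact hw <| funext fun i => norm_le_zero_iff.1 (neg_nonneg.1 (hneg i))

theorem subcritical_iff_inv_mulVec_one_nonneg (hM : ∀ i j, 0 ≤ M i j) (hdet : (1 - M).det ≠ 0) :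
    Subcritical M ↔ 0 ≤ (1 - M)⁻¹ *ᵥ 1 := by
  set v := (1 - M)⁻¹ *ᵥ (1 : ι → ℝ)
  have hv : v = M *ᵥ v + 1 := by
    have h1 : (1 - M) *ᵥ v = 1 := by
      rw [Matrix.mulVec_mulVec, Matrix.mul_nonsing_inv _ hdet.isUnit, Matrix.one_mulVec]
    rwa [Matrix.sub_mulVec, Matrix.one_mulVec, sub_eq_iff_eq_add'] at h1
  have hvi : ∀ i, v i = (M *ᵥ v) i + 1 := congrFun hv
  refine ⟨fun h => h.nonneg_of_mulVec_le hM fun i => by linarith [hvi i], fun h => ?_⟩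
  have hMv : 0 ≤ M *ᵥ v := by simpa using mulVec_mono_of_nonneg hM h
  exact ⟨v, fun i => by linarith [hvi i, show 0 ≤ (M *ᵥ v) i from hMv i],
    fun i => by linarith [hvi i]⟩

theorem det_one_sub_eq_zero_of_tendsto {X : Type*} {l : Filter X} [l.NeBot]
    {F : X → Matrix ι ι ℝ} (hF : Tendsto F l (𝓝 M)) (hM : ∀ i j, 0 ≤ M i j)
    (hF₀ : ∀ᶠ x in l, ∀ i j, 0 ≤ F x i j) (hsub : ∀ᶠ x in l, Subcritical (F x))
    (hnot : ¬ Subcritical M) : (1 - M).det = 0 := by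
  by_contra hdet
  refine hnot ((subcritical_iff_inv_mulVec_one_nonneg hM hdet).2 ?_)
  have hinv : ContinuousAt Ring.inverse (1 - M).det := by
    simpa only [Ring.inverse_eq_inv'] using continuousAt_inv₀ hdet
  have hlim : Tendsto (fun x => (1 - F x)⁻¹ *ᵥ (1 : ι → ℝ)) l (𝓝 ((1 - M)⁻¹ *ᵥ 1)) :=
    ((continuous_id.matrix_mulVec continuous_const).tendsto _).comp
      ((continuousAt_matrix_inv _ hinv).tendsto.comp (hF.const_sub 1))
  refine ge_of_tendsto hlim ?_
  filter_upwards [hF₀, hsub] with x hx₀ hx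
  exact (subcritical_iff_inv_mulVec_one_nonneg hx₀ (hx.det_one_sub_ne_zero fun i j =>
    (Real.norm_of_nonneg (hx₀ i j)).le)).1 hx

theorem exists_first_det_one_sub_eq_zero {F : ℝ → Matrix ι ι ℝ} {a b : ℝ} (hab : a < b)
    (hF₀ : ∀ x ∈ Set.Icc a b, ∀ i j, 0 ≤ F x i j) (hF : ContinuousOn F (Set.Icc a b))
    (ha : ∀ᶠ x in 𝓝[>] a, Subcritical (F x)) (hb : ¬ Subcritical (F b)) :
    ∃ c ∈ Set.Ioc a b, (1 - F c).det = 0 ∧ ∀ x ∈ Set.Ioo a c, Subcritical (F x) := by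
  set U : Set ℝ := {x ∈ Set.Ioc a b | ¬ Subcritical (F x)}
  have hbU : b ∈ U := ⟨⟨hab, le_rfl⟩, hb⟩
  have hU : BddBelow U := ⟨a, fun x hx => hx.1.1.le⟩
  set c := sInf U
  have hcb : c ≤ b := csInf_le hU hbU
  have hac : a < c := by
    obtain ⟨d, had, hd⟩ := mem_nhdsGT_iff_exists_Ioo_subset.1 ha
    refine lt_of_lt_of_le had (le_csInf ⟨b, hbU⟩ fun x hx => ?_)
    by_contra! hxd
    exact hx.2 (hd ⟨hx.1.1, hxd⟩)
  have hbelow : ∀ x ∈ Set.Ioo a c, Subcritical (F x) := by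
    intro x hx
    by_contra hnot
    exact hx.2.not_ge (csInf_le hU ⟨⟨hx.1, hx.2.le.trans hcb⟩, hnot⟩)
  have hcont : ContinuousWithinAt F (Set.Icc a b) c := hF c ⟨hac.le, hcb⟩
  have hc : ¬ Subcritical (F c) := by
    intro hsub
    have hfreq : ∃ᶠ x in 𝓝 c, x ∈ U :=
      mem_closure_iff_frequently.1 (csInf_mem_closure ⟨b, hbU⟩ hU)
    obtain ⟨x, hxU, hx⟩ :=
      (hfreq.and_eventually (eventually_nhdsWithin_iff.1 (hsub.eventually hcont))).exists
    exact hxU.2 (hx ⟨hxU.1.1.le, hxU.1.2⟩)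
  have : (𝓝[Set.Ioo a c] c).NeBot := right_nhdsWithin_Ioo_neBot hac
  have hsubset : Set.Ioo a c ⊆ Set.Icc a b := fun x hx => ⟨hx.1.le, hx.2.le.trans hcb⟩
  exact ⟨c, ⟨hac, hcb⟩, det_one_sub_eq_zero_of_tendsto (hcont.mono hsubset) (hF₀ c ⟨hac.le, hcb⟩)
    (eventually_nhdsWithin_of_forall fun x hx => hF₀ x (hsubset hx))
    (eventually_nhdsWithin_of_forall hbelow) hc, hbelow⟩

end Subcritical

section PoissonEquation

variable {m : ℕ} {M : Matrix (Fin m) (Fin m) ℝ}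

theorem mulVec_eq_self_of_forall_eq (hM : M ∈ Matrix.rowStochastic ℝ (Fin m)) {u : Fin m → ℝ}
    (hu : ∀ i j, u i = u j) : M *ᵥ u = u := by
  ext i
  have hui : u = u i • 1 := funext fun j => by simp [hu j i]
  conv_lhs => rw [hui, Matrix.mulVec_smul, Matrix.one_vecMul_of_mem_rowStochastic hM]
  simp

theorem pow_mulVec_le_of_mulVec_le (hM : M ∈ Matrix.rowStochastic ℝ (Fin m)) {u : Fin m → ℝ}
    (hu : M *ᵥ u ≤ u) (n : ℕ) : (M ^ n) *ᵥ u ≤ u := by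
  induction n with
  | zero => simp
  | succ n ih =>
    rw [pow_succ', ← Matrix.mulVec_mulVec]
    exact (mulVec_mono_of_nonneg (fun _ _ => Matrix.nonneg_of_mem_rowStochastic hM) ih).trans hu

theorem eq_of_mulVec_le (hM : M ∈ Matrix.rowStochastic ℝ (Fin m)) (hirr : MatIrreducible M)
    {u : Fin m → ℝ} (hu : M *ᵥ u ≤ u) (i j : Fin m) : u i = u j := by
  have : Nonempty (Fin m) := ⟨i⟩
  obtain ⟨r, hr⟩ := Finite.exists_min u
  suffices hmin : ∀ s, u s = u r by rw [hmin i, hmin j]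
  intro s
  obtain ⟨n, -, hn⟩ := hirr r s
  have hMn := pow_mem hM n
  have hterm : ∀ t, 0 ≤ (M ^ n) r t * (u t - u r) := fun t =>
    mul_nonneg (Matrix.nonneg_of_mem_rowStochastic hMn) (sub_nonneg.2 (hr t))
  have hsum : ∑ t, (M ^ n) r t * (u t - u r) ≤ 0 := by
    simp only [mul_sub, Finset.sum_sub_distrib, ← Finset.sum_mul,
      Matrix.sum_row_of_mem_rowStochastic hMn, one_mul]
    exact sub_nonpos.2 (pow_mulVec_le_of_mulVec_le hM hu n r)
  have hzero := (Finset.sum_eq_zero_iff_of_nonneg fun t _ => hterm t).1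
    (hsum.antisymm (Finset.sum_nonneg fun t _ => hterm t)) s (Finset.mem_univ s)
  exact sub_eq_zero.1 ((mul_eq_zero.1 hzero).resolve_left hn.ne')

/-- The operator `h ↦ h - M h + h(j₀) 1`. It is invertible for irreducible stochastic `M`, and its
inverse solves the Poisson equation of `M`. -/
noncomputable def poissonMap (M : Matrix (Fin m) (Fin m) ℝ) (j₀ : Fin m) :
    (Fin m → ℝ) →ₗ[ℝ] (Fin m → ℝ) :=
  LinearMap.id - M.mulVecLin + (LinearMap.proj j₀).smulRight 1

theorem poissonMap_apply (j₀ : Fin m) (h : Fin m → ℝ) (i : Fin m) :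
    poissonMap M j₀ h i = h i - (M *ᵥ h) i + h j₀ := by
  simp [poissonMap]

theorem apply_pos_of_poissonMap_nonneg (hM : M ∈ Matrix.rowStochastic ℝ (Fin m))
    (hirr : MatIrreducible M) (j₀ : Fin m) {h : Fin m → ℝ} (hh : 0 ≤ poissonMap M j₀ h)
    {j : Fin m} (hj : 0 < poissonMap M j₀ h j) : 0 < h j₀ := by
  by_contra! hj₀
  have hsuper : M *ᵥ h ≤ h := fun i => by
    have hi : 0 ≤ poissonMap M j₀ h i := hh i
    rw [poissonMap_apply] at hi
    linarith
  rw [poissonMap_apply, mulVec_eq_self_of_forall_eq hM (eq_of_mulVec_le hM hirr hsuper)] at hj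
  linarith

theorem poissonMap_injective (hM : M ∈ Matrix.rowStochastic ℝ (Fin m)) (hirr : MatIrreducible M)
    (j₀ : Fin m) : Function.Injective (poissonMap M j₀) := by
  rw [injective_iff_map_eq_zero]
  intro h hh
  have hi : ∀ i, h i - (M *ᵥ h) i + h j₀ = 0 := fun i => by rw [← poissonMap_apply, hh]; rfl
  have hconst : ∀ i j, h i = h j := by
    rcases le_total (h j₀) 0 with hj₀ | hj₀
    · exact eq_of_mulVec_le hM hirr fun i => by linarith [hi i]
    · have hneg : M *ᵥ (-h) ≤ -h := fun i => by
        rw [Matrix.mulVec_neg, Pi.neg_apply, Pi.neg_apply]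
        linarith [hi i]
      exact fun i j => neg_injective (eq_of_mulVec_le hM hirr hneg i j)
  ext i
  have hj₀ := hi j₀
  rw [mulVec_eq_self_of_forall_eq hM hconst, sub_self, zero_add] at hj₀
  rw [hconst i j₀, hj₀, Pi.zero_apply]

theorem exists_pos_weights_poisson (hM : M ∈ Matrix.rowStochastic ℝ (Fin m))
    (hirr : MatIrreducible M) :
    ∃ ϖ : Fin m → ℝ, (∀ j, 0 < ϖ j) ∧
      ∀ β : Fin m → ℝ, ∃ h : Fin m → ℝ, h ≤ 0 ∧ ∀ j, (β + M *ᵥ h - h) j = ϖ ⬝ᵥ β := by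
  rcases isEmpty_or_nonempty (Fin m) with _ | ⟨⟨j₀⟩⟩
  · exact ⟨0, isEmptyElim, fun _ => ⟨0, le_rfl, isEmptyElim⟩⟩
  set T := LinearEquiv.ofInjectiveEndo (poissonMap M j₀) (poissonMap_injective hM hirr j₀)
  have hT : ∀ β, poissonMap M j₀ (T.symm β) = β := T.apply_symm_apply
  refine ⟨fun j => T.symm (Pi.single j 1) j₀, fun j => ?_, fun β => ?_⟩
  · refine apply_pos_of_poissonMap_nonneg hM hirr j₀ (j := j) ?_ ?_ <;> rw [hT]
    · exact Pi.single_nonneg.2 zero_le_one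
    · simp
  have hweights : T.symm β j₀ = (fun j => T.symm (Pi.single j 1) j₀) ⬝ᵥ β := by
    conv_lhs => rw [pi_eq_sum_univ' β]
    simp [dotProduct, mul_comm]
  obtain ⟨C, hC⟩ := (Set.finite_range (T.symm β)).bddAbove
  have hshift : M *ᵥ (C • (1 : Fin m → ℝ)) = C • 1 := by
    rw [Matrix.mulVec_smul, Matrix.one_vecMul_of_mem_rowStochastic hM]
  refine ⟨T.symm β - C • 1, fun i => ?_, fun j => ?_⟩
  · simpa using hC ⟨i, rfl⟩
  · have hj := congrFun (hT β) j
    rw [poissonMap_apply, hweights] at hj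
    simp only [Matrix.mulVec_sub, hshift, Pi.add_apply, Pi.sub_apply, Pi.smul_apply, Pi.one_apply]
    linarith

end PoissonEquation

section LaurentSeries

variable {x R : ℝ}

theorem intCast_le_slope_zpow (hx : 1 < x) (k : ℤ) : (k : ℝ) ≤ slope (fun y : ℝ => y ^ k) 1 x :=
  (convexOn_zpow k).le_slope_of_hasDerivAt (Set.mem_Ioi.2 one_pos) (Set.mem_Ioi.2 (by linarith)) hx
    (by simpa using hasDerivAt_zpow k (1 : ℝ) (Or.inl one_ne_zero))

theorem slope_zpow_mono (hx : 1 < x) (hxR : x ≤ R) (k : ℤ) :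
    slope (fun y : ℝ => y ^ k) 1 x ≤ slope (fun y : ℝ => y ^ k) 1 R :=
  (convexOn_zpow k).slope_mono (Set.mem_Ioi.2 one_pos)
    ⟨Set.mem_Ioi.2 (by linarith), hx.ne'⟩ ⟨Set.mem_Ioi.2 (by linarith), (by linarith : R ≠ 1)⟩ hxR

theorem slope_zpow_max_le (hR : 1 < R) (N : ℕ) (n : ℤ) :
    slope (fun y : ℝ => y ^ max n (-N : ℤ)) 1 R ≤ R ^ n / (R - 1) := by
  have hRn : 0 < R ^ n := zpow_pos (by linarith) n
  rw [slope_def_field, one_zpow]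
  refine div_le_div_of_nonneg_right ?_ (by linarith)
  rcases le_total n (-N : ℤ) with hn | hn
  · rw [max_eq_right hn]
    linarith [zpow_le_one_of_nonpos₀ hR.le (by omega : (-N : ℤ) ≤ 0)]
  · rw [max_eq_left hn]
    linarith

theorem abs_slope_zpow_max_le (hx : 1 < x) (hxR : x ≤ R) (N : ℕ) (n : ℤ) :
    |slope (fun y : ℝ => y ^ max n (-N : ℤ)) 1 x| ≤ N + R ^ n / (R - 1) := by
  have hRn : 0 ≤ R ^ n / (R - 1) := div_nonneg (zpow_nonneg (by linarith) n) (by linarith)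
  have hlower : (-N : ℝ) ≤ (max n (-N : ℤ) : ℤ) := by exact_mod_cast le_max_right n (-N : ℤ)
  have : (0 : ℝ) ≤ N := N.cast_nonneg
  exact abs_le.2 ⟨by linarith [intCast_le_slope_zpow hx (max n (-N : ℤ))],
    by linarith [slope_zpow_mono hx hxR (max n (-N : ℤ)),
      slope_zpow_max_le (hx.trans_le hxR) N n]⟩

theorem max_intCast_zero_le (hR : 1 < R) (n : ℤ) : max (n : ℝ) 0 ≤ R ^ n / (R - 1) := by
  have h := (intCast_le_slope_zpow hR (max n 0)).trans
    (by simpa using slope_zpow_max_le hR 0 n)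
  exact_mod_cast h

theorem zpow_le_one_add_zpow (hx : 1 ≤ x) (hxR : x ≤ R) (n : ℤ) : x ^ n ≤ 1 + R ^ n := by
  rcases le_total 0 n with hn | hn
  · linarith [zpow_le_zpow_left₀ hn (by linarith) hxR]
  · linarith [zpow_le_one_of_nonpos₀ hx hn, zpow_nonneg (by linarith : 0 ≤ R) n]

variable {a : ℤ → ℝ}

theorem summable_mul_zpow_of_lt_radius (ha : ∀ n, 0 ≤ a n) (hsum : Summable a) (hR : 1 ≤ R)
    (hradius : ENNReal.ofReal R < radius fun k => a (k + 1)) :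
    Summable fun n : ℤ => a n * R ^ n := by
  obtain ⟨r, hr⟩ := lt_iSup_iff.1 hradius
  obtain ⟨hr_sum, hRr⟩ := lt_iSup_iff.1 hr
  have hRr : R ≤ r := (ENNReal.ofReal_lt_coe_iff (by linarith)).1 hRr |>.le
  have hR₀ : 0 < R := by linarith
  have hterm : ∀ n, 0 ≤ a n * R ^ n := fun n => mul_nonneg (ha n) (zpow_nonneg hR₀.le n)
  refine .of_nat_of_neg_add_one ?_ ?_
  · rw [← summable_nat_add_iff 1]
    refine .of_nonneg_of_le (fun n => hterm _) (fun n => ?_) (hr_sum.mul_right R)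
    rw [zpow_natCast, pow_succ, ← mul_assoc, Nat.cast_succ]
    have := ha (n + 1)
    gcongr
  · have hneg : Summable fun n : ℕ => a (-(n + 1 : ℤ)) :=
      hsum.comp_injective (i := fun n : ℕ => -(n + 1 : ℤ)) fun k l hkl => by simpa using hkl
    exact .of_nonneg_of_le (fun n => hterm _)
      (fun n => mul_le_of_le_one_right (ha _) (zpow_le_one_of_nonpos₀ hR (by omega))) hneg

theorem continuousOn_tsum_mul_zpow (ha : ∀ n, 0 ≤ a n) (hsum : Summable a)
    (hsumR : Summable fun n => a n * R ^ n) :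
    ContinuousOn (fun y : ℝ => ∑' n, a n * y ^ n) (Set.Icc 1 R) := by
  have hdom : Summable fun n => a n * (1 + R ^ n) := by
    simpa only [mul_add, mul_one] using hsum.add hsumR
  refine continuousOn_tsum (fun n => ?_) hdom fun n y hy => ?_
  · exact continuousOn_const.mul
      (continuousOn_zpow₀ n |>.mono fun y hy => (by linarith [hy.1] : y ≠ 0))
  · have hyn : 0 ≤ y ^ n := zpow_nonneg (by linarith [hy.1]) n
    rw [Real.norm_of_nonneg (mul_nonneg (ha n) hyn)]
    exact mul_le_mul_of_nonneg_left (zpow_le_one_add_zpow hy.1 hy.2 n) (ha n)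

theorem summable_mul_zpow_of_mem_Icc (ha : ∀ n, 0 ≤ a n) (hsum : Summable a)
    (hsumR : Summable fun n => a n * R ^ n) (hx : x ∈ Set.Icc 1 R) :
    Summable fun n => a n * x ^ n := by
  refine .of_nonneg_of_le
    (fun n => mul_nonneg (ha n) (zpow_nonneg (by linarith [hx.1]) n)) (fun n => ?_)
    (hsum.add hsumR)
  rw [← mul_one_add]
  exact mul_le_mul_of_nonneg_left (zpow_le_one_add_zpow hx.1 hx.2 n) (ha n)

theorem summable_mul_zpow_max (ha : ∀ n, 0 ≤ a n) (hsum : Summable a)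
    (hsumx : Summable fun n => a n * x ^ n) (hx : 1 ≤ x) (N : ℕ) :
    Summable fun n => a n * x ^ max n (-N : ℤ) := by
  have hx₀ : 0 ≤ x := by linarith
  refine .of_nonneg_of_le (fun n => mul_nonneg (ha n) (zpow_nonneg hx₀ _)) (fun n => ?_)
    (hsum.add hsumx)
  rw [← mul_one_add]
  refine mul_le_mul_of_nonneg_left ?_ (ha n)
  rcases le_total n (-N : ℤ) with hn | hn
  · rw [max_eq_right hn]
    linarith [zpow_le_one_of_nonpos₀ hx (by omega : (-N : ℤ) ≤ 0), zpow_nonneg hx₀ n]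
  · rw [max_eq_left hn]
    linarith

-- Truncating the exponents at `-N` bounds the difference quotients by `N + R ^ n / (R - 1)`, so
-- the one-sided derivative at `1` exists although the terms of very negative index need not have
-- a finite mean.
theorem hasDerivWithinAt_tsum_mul_zpow_max (ha : ∀ n, 0 ≤ a n) (hsum : Summable a) (hR : 1 < R)
    (hsumR : Summable fun n => a n * R ^ n) (N : ℕ) :
    HasDerivWithinAt (fun y : ℝ => ∑' n, a n * y ^ max n (-N : ℤ))
      (∑' n, a n * (max n (-N : ℤ) : ℤ)) (Set.Ioi 1) 1 := by
  rw [hasDerivWithinAt_iff_tendsto_slope' Set.self_notMem_Ioi]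
  have hnear : Set.Ioc 1 R ∈ 𝓝[>] (1 : ℝ) := Ioc_mem_nhdsGT hR
  have hdom : Summable fun n => a n * (N + R ^ n / (R - 1)) := by
    simpa only [mul_add, mul_div_assoc] using (hsum.mul_right (N : ℝ)).add (hsumR.div_const (R - 1))
  have hlim : ∀ n, Tendsto (fun y => a n * slope (fun y : ℝ => y ^ max n (-N : ℤ)) 1 y) (𝓝[>] 1)
      (𝓝 (a n * (max n (-N : ℤ) : ℤ))) := fun n => by
    have hderiv : HasDerivAt (fun y : ℝ => y ^ max n (-N : ℤ)) (max n (-N : ℤ) : ℤ) 1 := by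
      simpa using hasDerivAt_zpow (max n (-N : ℤ)) (1 : ℝ) (Or.inl one_ne_zero)
    exact ((hasDerivWithinAt_iff_tendsto_slope' Set.self_notMem_Ioi).1
      hderiv.hasDerivWithinAt).const_mul (a n)
  have hbound : ∀ᶠ y in 𝓝[>] 1, ∀ n,
      ‖a n * slope (fun y : ℝ => y ^ max n (-N : ℤ)) 1 y‖ ≤ a n * (N + R ^ n / (R - 1)) := by
    filter_upwards [hnear] with y hy n
    rw [norm_mul, Real.norm_of_nonneg (ha n)]
    exact mul_le_mul_of_nonneg_left (abs_slope_zpow_max_le hy.1 hy.2 N n) (ha n)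
  refine (tendsto_tsum_of_dominated_convergence hdom hlim hbound).congr' ?_
  filter_upwards [hnear] with y hy
  have hy_sum : Summable fun n => a n * y ^ max n (-N : ℤ) :=
    summable_mul_zpow_max ha hsum
      (summable_mul_zpow_of_mem_Icc ha hsum hsumR ⟨hy.1.le, hy.2⟩) hy.1.le N
  simp only [slope_def_field, one_zpow, mul_one]
  rw [← hy_sum.tsum_sub hsum, ← tsum_div_const]
  simp only [mul_div_assoc', mul_sub, mul_one]

end LaurentSeries

section TruncatedMean

variable {κ : Type*} {a X : κ → ℝ}

theorem max_neg_eq_sub_min {x t : ℝ} (ht : 0 ≤ t) : max x (-t) = max x 0 - min (max (-x) 0) t := by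
  rcases le_total x 0 with hx | hx
  · rw [max_eq_right hx, max_eq_left (neg_nonneg.2 hx), zero_sub, ← max_neg_neg, neg_neg]
  · rw [max_eq_left hx, max_eq_right (neg_nonpos.2 hx), min_eq_left ht, sub_zero,
      max_eq_left (by linarith)]

theorem summable_mul_of_nonneg_of_le (ha : ∀ k, 0 ≤ a k) (hsum : Summable a) {C : ℝ}
    (hX : ∀ k, 0 ≤ X k) (hXC : ∀ k, X k ≤ C) : Summable fun k => a k * X k :=
  .of_nonneg_of_le (fun k => mul_nonneg (ha k) (hX k))
    (fun k => mul_le_mul_of_nonneg_left (hXC k) (ha k)) (hsum.mul_right C)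

theorem summable_mul_max_neg (ha : ∀ k, 0 ≤ a k) (hsum : Summable a)
    (hpos : Summable fun k => a k * max (X k) 0) (N : ℕ) :
    Summable fun k => a k * max (X k) (-N) := by
  simp only [max_neg_eq_sub_min N.cast_nonneg, mul_sub]
  exact hpos.sub <| summable_mul_of_nonneg_of_le ha hsum
    (fun k => le_min (le_max_right _ _) N.cast_nonneg) fun k => min_le_right _ _

theorem summable_and_tsum_nonneg_of_truncated_nonneg (ha : ∀ k, 0 ≤ a k) (hsum : Summable a)
    (hpos : Summable fun k => a k * max (X k) 0)
    (hN : ∀ N : ℕ, 0 ≤ ∑' k, a k * max (X k) (-N)) :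
    Summable (fun k => a k * X k) ∧ 0 ≤ ∑' k, a k * X k := by
  have hneg₀ : ∀ k, 0 ≤ a k * max (-X k) 0 := fun k => mul_nonneg (ha k) (le_max_right _ _)
  have hfinite : ∀ u : Finset κ, ∑ k ∈ u, a k * max (-X k) 0 ≤ ∑' k, a k * max (X k) 0 := by
    intro u
    obtain ⟨N, hNu⟩ := exists_nat_ge (∑ k ∈ u, max (-X k) 0)
    have hmin : ∀ k ∈ u, min (max (-X k) 0) N = max (-X k) 0 := fun k hk => min_eq_left <|
      (Finset.single_le_sum (fun l _ => le_max_right (-X l) 0) hk).trans hNu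
    have hmin_sum : Summable fun k => a k * min (max (-X k) 0) N :=
      summable_mul_of_nonneg_of_le ha hsum
        (fun k => le_min (le_max_right _ _) N.cast_nonneg) fun k => min_le_right _ _
    have hmin_tsum : ∑' k, a k * max (X k) (-N) =
        ∑' k, a k * max (X k) 0 - ∑' k, a k * min (max (-X k) 0) N := by
      rw [← hpos.tsum_sub hmin_sum]
      simp only [max_neg_eq_sub_min N.cast_nonneg, mul_sub]
    calc ∑ k ∈ u, a k * max (-X k) 0 = ∑ k ∈ u, a k * min (max (-X k) 0) N :=
          Finset.sum_congr rfl fun k hk => by rw [hmin k hk]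
      _ ≤ ∑' k, a k * min (max (-X k) 0) N := hmin_sum.sum_le_tsum u fun k _ =>
          mul_nonneg (ha k) (le_min (le_max_right _ _) N.cast_nonneg)
      _ ≤ ∑' k, a k * max (X k) 0 := by linarith [hN N]
  have hneg : Summable fun k => a k * max (-X k) 0 := summable_of_sum_le hneg₀ hfinite
  have hsplit : ∀ k, a k * X k = a k * max (X k) 0 - a k * max (-X k) 0 := fun k => by
    rw [← mul_sub, max_zero_sub_max_neg_zero_eq_self]
  simp only [hsplit]
  refine ⟨hpos.sub hneg, ?_⟩
  rw [hpos.tsum_sub hneg, sub_nonneg]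
  exact Real.tsum_le_of_sum_le hneg₀ hfinite

end TruncatedMean

section Stationary

variable {m : ℕ} {K : S m → S m → ℝ} {pd f : S m → ℝ}

theorem Pn_nonneg (hK : ∀ x y, 0 ≤ K x y) (n : ℕ) (x y : S m) : 0 ≤ Pn K n x y := by
  induction n generalizing x with
  | zero =>
    rw [Pn]
    split_ifs <;> norm_num
  | succ n ih => exact tsum_nonneg fun z => mul_nonneg (hK x z) (ih z)

theorem of_Pn_pos (hK : ∀ x y, 0 ≤ K x y) {Q : S m → Prop}
    (hQ : ∀ x y, Q x → 0 < K x y → Q y) {n : ℕ} {x y : S m} (hx : Q x) (hn : 0 < Pn K n x y) :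
    Q y := by
  induction n generalizing x with
  | zero =>
    rw [Pn] at hn
    split_ifs at hn with hxy
    · exact hxy ▸ hx
    · exact absurd hn (lt_irrefl 0)
  | succ n ih =>
    obtain ⟨z, hz⟩ : ∃ z, K x z * Pn K n z y ≠ 0 := by
      by_contra! hzero
      simp [Pn, hzero] at hn
    rw [mul_ne_zero_iff] at hz
    exact ih (hQ x z hx ((hK x z).lt_of_ne' hz.1)) ((Pn_nonneg hK n z y).lt_of_ne' hz.2)

theorem ChainIrreducible.forall_of_closed (hirr : ChainIrreducible K) (hK : ∀ x y, 0 ≤ K x y)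
    {Q : S m → Prop} (hQ : ∀ x y, Q x → 0 < K x y → Q y) {x : S m} (hx : Q x) (y : S m) : Q y :=
  let ⟨_, _, hn⟩ := hirr x y
  of_Pn_pos hK hQ hx hn

theorem IsStationary.exists_pos (hpd : IsStationary K pd) : ∃ x, 0 < pd x := by
  by_contra! hle
  have hzero : pd = 0 := funext fun x => (hle x).antisymm (hpd.1 x)
  exact zero_ne_one (hasSum_zero.unique (hzero ▸ hpd.2.1))

theorem IsStationary.pos (hpd : IsStationary K pd) (hK : ∀ x y, 0 ≤ K x y)
    (hirr : ChainIrreducible K) (y : S m) : 0 < pd y :=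
  let ⟨_, hx⟩ := hpd.exists_pos
  hirr.forall_of_closed hK (fun x y hx hxy => (mul_pos hx hxy).trans_le
    (le_hasSum (hpd.2.2 y) x fun z _ => mul_nonneg (hpd.1 z) (hK z y))) hx y

theorem IsStationary.hasSum_mul_tsum (hpd : IsStationary K pd) (hK : Stochastic K) {C : ℝ}
    (hf : ∀ x, 0 ≤ f x) (hfC : ∀ x, f x ≤ C) :
    HasSum (fun x => pd x * ∑' y, K x y * f y) (∑' x, pd x * f x) := by
  obtain ⟨hpd₀, hpd₁, hstat⟩ := hpd
  have hKf₀ : ∀ x y, 0 ≤ K x y * f y := fun x y => mul_nonneg (hK.1 x y) (hf y)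
  have hKf : ∀ x, Summable fun y => K x y * f y := fun x =>
    summable_mul_of_nonneg_of_le (hK.1 x) (hK.2 x).summable hf hfC
  have hKfC : ∀ x, ∑' y, K x y * f y ≤ C := fun x =>
    hasSum_le (fun y => mul_le_mul_of_nonneg_left (hfC y) (hK.1 x y)) (hKf x).hasSum
      (by simpa using (hK.2 x).mul_right C)
  have hsum : Summable fun x => pd x * ∑' y, K x y * f y :=
    summable_mul_of_nonneg_of_le hpd₀ hpd₁.summable (fun x => tsum_nonneg (hKf₀ x)) hKfC
  have hprod : Summable fun p : S m × S m => pd p.1 * (K p.1 p.2 * f p.2) :=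
    (summable_prod_of_nonneg fun p => mul_nonneg (hpd₀ p.1) (hKf₀ p.1 p.2)).2
      ⟨fun x => (hKf x).mul_left (pd x), by simpa only [tsum_mul_left] using hsum⟩
  convert hsum.hasSum using 1
  calc ∑' y, pd y * f y = ∑' y, ∑' x, pd x * (K x y * f y) :=
        tsum_congr fun y => by simpa only [mul_assoc] using ((hstat y).mul_right (f y)).tsum_eq.symm
    _ = ∑' x, ∑' y, pd x * (K x y * f y) :=
        (Summable.tsum_comm (f := fun x y => pd x * (K x y * f y)) hprod)
    _ = ∑' x, pd x * ∑' y, K x y * f y := by simp only [tsum_mul_left]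

/-- The amount by which one step of `K` decreases the truncation `min f N` in mean at `x`; it is
`0` where the truncation is subharmonic. -/
noncomputable def deficit (K : S m → S m → ℝ) (f : S m → ℝ) (N : ℕ) (x : S m) : ℝ :=
  max (min (f x) N - ∑' y, K x y * min (f y) N) 0

theorem deficit_nonneg (N : ℕ) (x : S m) : 0 ≤ deficit K f N x := le_max_right _ _

theorem min_natCast_nonneg (hf : ∀ x, 0 ≤ f x) (N : ℕ) (x : S m) : 0 ≤ min (f x) N :=
  le_min (hf x) N.cast_nonneg

theorem tendsto_min_natCast (t : ℝ) : Tendsto (fun N : ℕ => min t N) atTop (𝓝 t) := by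
  refine tendsto_const_nhds.congr' ?_
  filter_upwards [tendsto_natCast_atTop_atTop.eventually_ge_atTop t] with N hN
  exact (min_eq_left hN).symm

theorem summable_mul_min (hK : Stochastic K) (hf : ∀ x, 0 ≤ f x) (N : ℕ) (x : S m) :
    Summable fun y => K x y * min (f y) N :=
  summable_mul_of_nonneg_of_le (hK.1 x) (hK.2 x).summable (min_natCast_nonneg hf N)
    fun _ => min_le_right _ _

theorem deficit_eq_zero_of_apply_eq_zero (hK : Stochastic K) (hf : ∀ x, 0 ≤ f x) (N : ℕ) {x : S m}
    (hx : f x = 0) : deficit K f N x = 0 := by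
  have hsum : 0 ≤ ∑' y, K x y * min (f y) N :=
    tsum_nonneg fun y => mul_nonneg (hK.1 x y) (min_natCast_nonneg hf N y)
  rw [deficit, hx, min_eq_left N.cast_nonneg]
  exact max_eq_right (by linarith)

theorem deficit_le (hK : Stochastic K) (hf : ∀ x, 0 ≤ f x) (N : ℕ) (x : S m) :
    deficit K f N x ≤ f x - ∑' y, K x y * min (f x) (f y) := by
  have hconst : ∀ t : ℝ, HasSum (fun y => K x y * t) t := fun t => by
    simpa using (hK.2 x).mul_right t
  have hmin : Summable fun y => K x y * min (f x) (f y) :=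
    summable_mul_of_nonneg_of_le (hK.1 x) (hK.2 x).summable (fun y => le_min (hf x) (hf y))
      fun y => min_le_left _ _
  refine max_le ?_ ?_
  · refine hasSum_le (fun y => ?_) ((hconst _).sub (summable_mul_min hK hf N x).hasSum)
      ((hconst _).sub hmin.hasSum)
    rw [← mul_sub, ← mul_sub]
    refine mul_le_mul_of_nonneg_left ?_ (hK.1 x y)
    rcases min_cases (f x) (f y) with h | h <;> rcases min_cases (f x) (N : ℝ) with h' | h' <;>
      rcases min_cases (f y) (N : ℝ) with h'' | h'' <;> linarith
  · exact sub_nonneg.2 (hasSum_le (fun y => mul_le_mul_of_nonneg_left (min_le_left _ _) (hK.1 x y))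
      hmin.hasSum (hconst _))

theorem tendsto_deficit (hK : Stochastic K) (hf : ∀ x, 0 ≤ f x) {x : S m}
    (hsub : 0 < f x → Summable (fun y => K x y * f y) ∧ f x ≤ ∑' y, K x y * f y) :
    Tendsto (fun N => deficit K f N x) atTop (𝓝 0) := by
  rcases (hf x).eq_or_lt with hx | hx
  · exact tendsto_const_nhds.congr fun N =>
      (deficit_eq_zero_of_apply_eq_zero hK hf N hx.symm).symm
  obtain ⟨hsum, hle⟩ := hsub hx
  have hlim : Tendsto (fun N : ℕ => ∑' y, K x y * min (f y) N) atTop (𝓝 (∑' y, K x y * f y)) := by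
    refine tendsto_tsum_of_dominated_convergence hsum
      (fun y => (tendsto_min_natCast (f y)).const_mul _) (.of_forall fun N y => ?_)
    rw [Real.norm_of_nonneg (mul_nonneg (hK.1 x y) (min_natCast_nonneg hf N y))]
    exact mul_le_mul_of_nonneg_left (min_le_left _ _) (hK.1 x y)
  have hmax := ((tendsto_min_natCast (f x)).sub hlim).max (tendsto_const_nhds (x := (0 : ℝ)))
  rwa [max_eq_right (sub_nonpos.2 hle)] at hmax

theorem IsStationary.mul_min_le_tsum_deficit (hpd : IsStationary K pd) (hK : Stochastic K)
    (hf : ∀ x, 0 ≤ f x) (N : ℕ) (hsum : Summable fun x => pd x * deficit K f N x) {x : S m}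
    (hx : f x = 0) (y : S m) :
    pd x * (K x y * min (f y) N) ≤ ∑' z, pd z * deficit K f N z := by
  set g : S m → ℝ := fun z => min (f z) N
  have hg₀ : ∀ z, 0 ≤ g z := min_natCast_nonneg hf N
  have hgN : ∀ z, g z ≤ N := fun z => min_le_right _ _
  have hbalance : HasSum
      (fun z => pd z * (∑' w, K z w * g w) - pd z * g z + pd z * deficit K f N z)
      (∑' z, pd z * deficit K f N z) := by
    simpa using ((hpd.hasSum_mul_tsum hK hg₀ hgN).sub (summable_mul_of_nonneg_of_le hpd.1
      hpd.2.1.summable hg₀ hgN).hasSum).add hsum.hasSum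
  have hterm : ∀ z, 0 ≤ pd z * (∑' w, K z w * g w) - pd z * g z + pd z * deficit K f N z :=
    fun z => by
      have hdef : g z - ∑' w, K z w * g w ≤ deficit K f N z := le_max_left _ _
      nlinarith [hpd.1 z]
  have hgx : g x = 0 := by simp [g, hx]
  calc pd x * (K x y * g y) ≤ pd x * ∑' w, K x w * g w :=
        mul_le_mul_of_nonneg_left ((summable_mul_min hK hf N x).le_tsum y fun w _ =>
          mul_nonneg (hK.1 x w) (hg₀ w)) (hpd.1 x)
    _ = pd x * (∑' w, K x w * g w) - pd x * g x + pd x * deficit K f N x := by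
        rw [hgx, deficit_eq_zero_of_apply_eq_zero hK hf N hx]
        ring
    _ ≤ ∑' z, pd z * deficit K f N z := le_hasSum hbalance x fun z _ => hterm z

-- By stationarity the mean gain `pd x * K x y * f y` at a zero `x` of `f` is paid for by the mean
-- deficit of the truncations of `f`, which vanishes in the limit.
theorem IsStationary.eq_zero_of_subharmonic (hpd : IsStationary K pd) (hK : Stochastic K)
    (hirr : ChainIrreducible K) (hf : ∀ x, 0 ≤ f x) {C : ℝ}
    (hdrop : ∀ x, f x - ∑' y, K x y * min (f x) (f y) ≤ C)
    (hsub : ∀ x, 0 < f x → Summable (fun y => K x y * f y) ∧ f x ≤ ∑' y, K x y * f y)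
    {x₀ : S m} (hx₀ : f x₀ = 0) (y : S m) : f y = 0 := by
  have hC : ∀ N x, deficit K f N x ≤ C := fun N x => (deficit_le hK hf N x).trans (hdrop x)
  have hlim : Tendsto (fun N => ∑' z, pd z * deficit K f N z) atTop (𝓝 0) := by
    have h := tendsto_tsum_of_dominated_convergence (hpd.2.1.summable.mul_right C)
      (fun z => (tendsto_deficit hK hf (hsub z)).const_mul (pd z)) (.of_forall fun N z => by
        rw [Real.norm_of_nonneg (mul_nonneg (hpd.1 z) (deficit_nonneg N z))]
        exact mul_le_mul_of_nonneg_left (hC N z) (hpd.1 z))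
    simpa using h
  refine hirr.forall_of_closed hK.1 (Q := fun x => f x = 0) (fun x y hx hxy => ?_) hx₀ y
  have hgain : pd x * (K x y * f y) ≤ 0 :=
    le_of_tendsto_of_tendsto' (((tendsto_min_natCast (f y)).const_mul _).const_mul _) hlim fun N =>
      hpd.mul_min_le_tsum_deficit hK hf N (summable_mul_of_nonneg_of_le hpd.1 hpd.2.1.summable
        (deficit_nonneg N) (hC N)) hx y
  have hpos := mul_pos (hpd.pos hK.1 hirr x) hxy
  rw [← mul_assoc] at hgain
  exact (nonpos_of_mul_nonpos_right hgain hpos).antisymm (hf y)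

end Stationary

theorem hasSum_prod_of_fintype {α β E : Type*} [Fintype β] [AddCommMonoid E] [TopologicalSpace E]
    [ContinuousAdd E] {f : α × β → E} {t : β → E} (hf : ∀ b, HasSum (fun a => f (a, b)) (t b)) :
    HasSum f (∑ b, t b) := by
  classical
  have hfiber : ∀ b, HasSum (fun p : α × β => if p.2 = b then f p else 0) (t b) := fun b => by
    refine ((Prod.mk_left_injective b).hasSum_iff ?_).1 (by simpa [Function.comp_def] using hf b)
    rintro ⟨a, b'⟩ hp
    exact if_neg fun hb => hp ⟨a, by rw [← hb]⟩
  simpa using hasSum_sum fun b (_ : b ∈ Finset.univ) => hfiber b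

section Drift

variable {m : ℕ} {A B : ℤ → Matrix (Fin m) (Fin m) ℝ} {h : Fin m → ℝ}

/-- The matrix `∑ₙ n Aₙ` of mean level increments, `0` at entries whose series diverges. -/
noncomputable def jumpMean (A : ℤ → Matrix (Fin m) (Fin m) ℝ) : Matrix (Fin m) (Fin m) ℝ :=
  Matrix.of fun r s => ∑' n : ℤ, A n r s * n

/-- The level plus a phase-dependent correction `h`, cut off at `0`. When `h` solves the Poisson
equation of the phase process, the level plus `h` has constant drift away from level `0`. -/
noncomputable def tiltedLevel (h : Fin m → ℝ) (l : ℤ) (s : Fin m) : ℝ :=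
  max (l + h s) 0

theorem tiltedLevel_nonneg (h : Fin m → ℝ) (l : ℤ) (s : Fin m) : 0 ≤ tiltedLevel h l s :=
  le_max_right _ _

theorem le_tiltedLevel (h : Fin m → ℝ) (l : ℤ) (s : Fin m) : l + h s ≤ tiltedLevel h l s :=
  le_max_left _ _

theorem tiltedLevel_le_abs (h : Fin m → ℝ) (l : ℤ) (s : Fin m) : tiltedLevel h l s ≤ |l + h s| :=
  max_le (le_abs_self _) (abs_nonneg _)

theorem tiltedLevel_of_nonpos (hh : h ≤ 0) {l : ℤ} (hl : l ≤ 0) (s : Fin m) :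
    tiltedLevel h l s = 0 := by
  have hl' : (l : ℝ) ≤ 0 := by exact_mod_cast hl
  have hs : h s ≤ 0 := hh s
  exact max_eq_right (by linarith)

theorem tiltedLevel_sub_le (hh : h ≤ 0) (l n : ℤ) (j s : Fin m) :
    tiltedLevel h l j - tiltedLevel h (l + n) s ≤ |(n : ℝ)| + |h s| := by
  have hj : h j ≤ 0 := hh j
  have hnonneg := tiltedLevel_nonneg h (l + n) s
  have hle : (l + n : ℤ) + h s ≤ tiltedLevel h (l + n) s := le_tiltedLevel _ _ _
  push_cast at hle
  rw [sub_le_iff_le_add]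
  refine max_le ?_ (by positivity)
  linarith [neg_abs_le (n : ℝ), neg_abs_le (h s)]

theorem summable_of_phaseStochastic (hphase : PhaseStochastic A) (r s : Fin m) :
    Summable fun n => A n r s :=
  (hphase r).summable.comp_injective (Prod.mk_left_injective s)

-- Transitions from a level `i + 1` into the boundary level use the blocks `B`, but they do not
-- contribute when `φ` vanishes there.
theorem hasSum_P_mul_iff {φ : ℤ → Fin m → ℝ} (hφ : ∀ l ≤ 0, ∀ s, φ l s = 0) (i : ℕ) (j : Fin m)
    (t : ℝ) :
    HasSum (fun y : S m => P A B (i + 1, j) y * φ y.1 y.2) t ↔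
      HasSum (fun p : ℤ × Fin m => A p.1 j p.2 * φ ((i + 1 : ℕ) + p.1) p.2) t := by
  have hinj : Function.Injective fun y : S m => ((y.1 - (i + 1 : ℕ) : ℤ), y.2) := by
    rintro ⟨k, s⟩ ⟨k', s'⟩ hkk'
    simpa using hkk'
  rw [← hinj.hasSum_iff]
  · refine Iff.of_eq (congrArg (HasSum · t) (funext fun y => ?_))
    obtain ⟨_ | k, s⟩ := y
    · simp [hφ]
    · have hlevel : (i : ℤ) + 1 + (k - i) = k + 1 := by ring
      simp [P, hlevel]
  · rintro ⟨n, s⟩ hn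
    have hle : (i + 1 : ℕ) + n ≤ 0 := by
      by_contra! hlt
      exact hn ⟨(((i + 1 : ℕ) + n).toNat, s), Prod.ext (by simp only; omega) rfl⟩
    simp only [hφ _ hle, mul_zero]

theorem tsum_P_mul {φ : ℤ → Fin m → ℝ} (hφ : ∀ l ≤ 0, ∀ s, φ l s = 0) (i : ℕ) (j : Fin m)
    (hsum : Summable fun p : ℤ × Fin m => A p.1 j p.2 * φ ((i + 1 : ℕ) + p.1) p.2) :
    ∑' y : S m, P A B (i + 1, j) y * φ y.1 y.2 =
      ∑' p : ℤ × Fin m, A p.1 j p.2 * φ ((i + 1 : ℕ) + p.1) p.2 :=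
  ((hasSum_P_mul_iff hφ i j _).2 hsum.hasSum).tsum_eq

theorem hasSum_mul_jump_add (hphase : PhaseStochastic A)
    (hmean : ∀ j s, Summable fun n : ℤ => A n j s * n) (h : Fin m → ℝ) (j : Fin m) :
    HasSum (fun p : ℤ × Fin m => A p.1 j p.2 * (p.1 + h p.2))
      ((jumpMean A *ᵥ 1 + matA A *ᵥ h) j) := by
  simp only [mul_add]
  convert hasSum_prod_of_fintype (f := fun p : ℤ × Fin m => A p.1 j p.2 * p.1 + A p.1 j p.2 * h p.2)
    fun s => (hmean j s).hasSum.add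
      ((summable_of_phaseStochastic hphase j s).hasSum.mul_right (h s)) using 1
  simp [jumpMean, matA, Matrix.mulVec, dotProduct, Finset.sum_add_distrib]

theorem summable_mul_abs_jump_add (hA : ∀ k r s, 0 ≤ A k r s) (hphase : PhaseStochastic A)
    (hmean : ∀ j s, Summable fun n : ℤ => A n j s * n) (h : Fin m → ℝ) (j : Fin m) :
    Summable fun p : ℤ × Fin m => A p.1 j p.2 * (|(p.1 : ℝ)| + |h p.2|) := by
  have habs : ∀ s, Summable fun n : ℤ => A n j s * |(n : ℝ)| := fun s =>
    (hmean j s).abs.congr fun n => by rw [abs_mul, abs_of_nonneg (hA n j s)]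
  simp only [mul_add]
  exact (hasSum_prod_of_fintype
    (f := fun p : ℤ × Fin m => A p.1 j p.2 * |(p.1 : ℝ)| + A p.1 j p.2 * |h p.2|) fun s =>
      (habs s).hasSum.add
        ((summable_of_phaseStochastic hphase j s).hasSum.mul_right |h s|)).summable

theorem tiltedLevel_drop_le (hA : ∀ k r s, 0 ≤ A k r s) (hphase : PhaseStochastic A)
    (hmean : ∀ j s, Summable fun n : ℤ => A n j s * n) (hh : h ≤ 0) (i : ℕ) (j : Fin m) :
    tiltedLevel h (i + 1 : ℕ) j - ∑' y : S m, P A B (i + 1, j) y *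
        min (tiltedLevel h (i + 1 : ℕ) j) (tiltedLevel h y.1 y.2) ≤
      ∑' p : ℤ × Fin m, A p.1 j p.2 * (|(p.1 : ℝ)| + |h p.2|) := by
  set c := tiltedLevel h (i + 1 : ℕ) j
  have hc : 0 ≤ c := tiltedLevel_nonneg _ _ _
  have hsum : Summable fun p : ℤ × Fin m =>
      A p.1 j p.2 * min c (tiltedLevel h ((i + 1 : ℕ) + p.1) p.2) :=
    summable_mul_of_nonneg_of_le (fun p => hA p.1 j p.2) (hphase j).summable
      (fun p => le_min hc (tiltedLevel_nonneg _ _ _)) fun p => min_le_left _ _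
  rw [tsum_P_mul (φ := fun l s => min c (tiltedLevel h l s))
    (fun l hl s => by rw [tiltedLevel_of_nonpos hh hl, min_eq_right hc]) i j hsum]
  have hconst : HasSum (fun p : ℤ × Fin m => A p.1 j p.2 * c) c := by
    simpa using (hphase j).mul_right c
  refine hasSum_le (fun p => ?_) (hconst.sub hsum.hasSum)
    (summable_mul_abs_jump_add hA hphase hmean h j).hasSum
  rw [← mul_sub, ← max_sub_sub_left, sub_self]
  exact mul_le_mul_of_nonneg_left (max_le (by positivity) (tiltedLevel_sub_le hh _ _ _ _))
    (hA _ _ _)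

theorem tiltedLevel_subharmonic (hA : ∀ k r s, 0 ≤ A k r s) (hphase : PhaseStochastic A)
    (hmean : ∀ j s, Summable fun n : ℤ => A n j s * n) (hh : h ≤ 0) (i : ℕ) (j : Fin m)
    (hdrift : 0 ≤ (jumpMean A *ᵥ 1 + matA A *ᵥ h - h) j) :
    Summable (fun y : S m => P A B (i + 1, j) y * tiltedLevel h y.1 y.2) ∧
      tiltedLevel h (i + 1 : ℕ) j ≤ ∑' y : S m, P A B (i + 1, j) y * tiltedLevel h y.1 y.2 := by
  have hφ : ∀ l ≤ 0, ∀ s, tiltedLevel h l s = 0 := fun l hl s => tiltedLevel_of_nonpos hh hl s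
  have hlevel : HasSum (fun p : ℤ × Fin m => A p.1 j p.2 * (((i + 1 : ℕ) + p.1 : ℤ) + h p.2))
      ((i + 1 : ℕ) + (jumpMean A *ᵥ 1 + matA A *ᵥ h) j) := by
    simpa [mul_add, add_assoc] using
      ((hphase j).mul_right ((i + 1 : ℕ) : ℝ)).add (hasSum_mul_jump_add hphase hmean h j)
  have hsum : Summable fun p : ℤ × Fin m => A p.1 j p.2 * tiltedLevel h ((i + 1 : ℕ) + p.1) p.2 :=
    hlevel.summable.abs.of_nonneg_of_le
      (fun p => mul_nonneg (hA p.1 j p.2) (tiltedLevel_nonneg _ _ _)) fun p => by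
        rw [abs_mul, abs_of_nonneg (hA _ _ _)]
        exact mul_le_mul_of_nonneg_left (tiltedLevel_le_abs _ _ _) (hA _ _ _)
  refine ⟨((hasSum_P_mul_iff hφ i j _).2 hsum.hasSum).summable, ?_⟩
  rw [tsum_P_mul hφ i j hsum, tiltedLevel]
  refine max_le ?_ (tsum_nonneg fun p => mul_nonneg (hA _ _ _) (tiltedLevel_nonneg _ _ _))
  have hle : (i + 1 : ℕ) + (jumpMean A *ᵥ 1 + matA A *ᵥ h) j ≤
      ∑' p : ℤ × Fin m, A p.1 j p.2 * tiltedLevel h ((i + 1 : ℕ) + p.1) p.2 :=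
    hasSum_le (fun p => mul_le_mul_of_nonneg_left (le_tiltedLevel _ _ _) (hA _ _ _)) hlevel
      hsum.hasSum
  rw [Pi.sub_apply] at hdrift
  push_cast at hle ⊢
  linarith

-- Otherwise the tilted level is subharmonic for the chain and vanishes on level `0`.
theorem exists_drift_neg_of_isStationary (hA : ∀ k r s, 0 ≤ A k r s) (hphase : PhaseStochastic A)
    (hP : Stochastic (P A B)) (hirr : ChainIrreducible (P A B)) {pd : S m → ℝ}
    (hpd : IsStationary (P A B) pd) (hmean : ∀ j s, Summable fun n : ℤ => A n j s * n)
    (hh : h ≤ 0) : ∃ j, (jumpMean A *ᵥ 1 + matA A *ᵥ h - h) j < 0 := by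
  by_contra! hdrift
  set f : S m → ℝ := fun x => tiltedLevel h x.1 x.2
  have hf₀ : ∀ x, 0 ≤ f x := fun x => tiltedLevel_nonneg _ _ _
  have hfzero : ∀ j, f (0, j) = 0 := fun j => tiltedLevel_of_nonpos hh le_rfl j
  obtain ⟨C, hC⟩ := (Set.finite_range fun j =>
    ∑' p : ℤ × Fin m, A p.1 j p.2 * (|(p.1 : ℝ)| + |h p.2|)).bddAbove
  have hdrop : ∀ x, f x - ∑' y, P A B x y * min (f x) (f y) ≤ C := by
    rintro ⟨_ | i, j⟩
    · have hC₀ : 0 ≤ C := (tsum_nonneg fun p => mul_nonneg (hA _ _ _) (by positivity)).trans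
        (hC ⟨j, rfl⟩)
      simpa [hfzero, min_eq_left (hf₀ _)] using hC₀
    · exact (tiltedLevel_drop_le hA hphase hmean hh i j).trans (hC ⟨j, rfl⟩)
  have hsub : ∀ x, 0 < f x → Summable (fun y => P A B x y * f y) ∧ f x ≤ ∑' y, P A B x y * f y := by
    rintro ⟨_ | i, j⟩ hx
    · exact absurd (hfzero j) hx.ne'
    · exact tiltedLevel_subharmonic hA hphase hmean hh i j (hdrift j)
  obtain ⟨⟨-, j⟩, -⟩ := hpd.exists_pos
  obtain ⟨k, hk⟩ := exists_nat_gt (-h j)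
  have hkj : f (k, j) = 0 :=
    hpd.eq_zero_of_subharmonic hP hirr hf₀ hdrop hsub (hfzero j) (k, j)
  have hle : (k : ℤ) + h j ≤ f (k, j) := le_tiltedLevel _ _ _
  push_cast at hle
  linarith

end Drift

section GeneratingMatrix

variable {m : ℕ} {A B : ℤ → Matrix (Fin m) (Fin m) ℝ}

theorem matA_mem_rowStochastic (hA : ∀ k r s, 0 ≤ A k r s) (hphase : PhaseStochastic A) :
    matA A ∈ Matrix.rowStochastic ℝ (Fin m) :=
  Matrix.mem_rowStochastic_iff_sum.2 ⟨fun r s => tsum_nonneg fun k => hA k r s, fun r =>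
    (hasSum_prod_of_fintype (f := fun p : ℤ × Fin m => A p.1 r p.2)
      fun s => (summable_of_phaseStochastic hphase r s).hasSum).unique (hphase r)⟩

/-- The mean increment matrix `∑ₙ max(n, -N) Aₙ` with downward jumps cut off at `-N`, so that its
entries are finite even when those of `jumpMean A` are not. -/
noncomputable def truncJumpMean (A : ℤ → Matrix (Fin m) (Fin m) ℝ) (N : ℕ) :
    Matrix (Fin m) (Fin m) ℝ :=
  Matrix.of fun r s => ∑' n : ℤ, A n r s * (max n (-N : ℤ) : ℤ)

/-- The generating matrix `∑ₙ x^max(n, -N) Aₙ` of the jumps cut off below at `-N`, whose right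
derivative at `1` is `truncJumpMean A N`. -/
noncomputable def truncAstar (A : ℤ → Matrix (Fin m) (Fin m) ℝ) (N : ℕ) (x : ℝ) :
    Matrix (Fin m) (Fin m) ℝ :=
  Matrix.of fun r s => ∑' n : ℤ, A n r s * x ^ max n (-N : ℤ)

theorem hasSum_weights_mul {f : ℤ → ℝ} (hf : ∀ r s, Summable fun n => A n r s * f n)
    (ϖ : Fin m → ℝ) :
    HasSum (fun p : ℤ × Fin m × Fin m => ϖ p.2.1 * A p.1 p.2.1 p.2.2 * f p.1)
      (ϖ ⬝ᵥ ((Matrix.of fun r s => ∑' n, A n r s * f n) *ᵥ 1)) := by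
  convert hasSum_prod_of_fintype
    (f := fun p : ℤ × Fin m × Fin m => ϖ p.2.1 * A p.1 p.2.1 p.2.2 * f p.1) fun q =>
      ((hf q.1 q.2).hasSum.mul_left (ϖ q.1)).congr_fun fun n => mul_assoc _ _ _ using 1
  simp [Matrix.mulVec, dotProduct, Fintype.sum_prod_type, Finset.mul_sum]

-- If no truncated mean is negative, monotone convergence shows that the full mean exists and is
-- nonnegative.
theorem exists_truncJumpMean_neg (hA : ∀ k r s, 0 ≤ A k r s)
    (hsum : ∀ r s, Summable fun n => A n r s)
    (hpos : ∀ r s, Summable fun n : ℤ => A n r s * max (n : ℝ) 0) {ϖ : Fin m → ℝ}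
    (hϖ : ∀ j, 0 < ϖ j)
    (hdrift : (∀ r s, Summable fun n : ℤ => A n r s * n) → ϖ ⬝ᵥ (jumpMean A *ᵥ 1) < 0) :
    ∃ N, ϖ ⬝ᵥ (truncJumpMean A N *ᵥ 1) < 0 := by
  by_contra! hN
  set a : ℤ × Fin m × Fin m → ℝ := fun p => ϖ p.2.1 * A p.1 p.2.1 p.2.2
  have ha : ∀ p, 0 ≤ a p := fun p => mul_nonneg (hϖ _).le (hA _ _ _)
  have hasum : Summable a := by
    simpa using (hasSum_weights_mul (f := 1) (by simpa using hsum) ϖ).summable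
  obtain ⟨hmean, hnonneg⟩ := summable_and_tsum_nonneg_of_truncated_nonneg
    (X := fun p : ℤ × Fin m × Fin m => (p.1 : ℝ)) ha hasum (hasSum_weights_mul hpos ϖ).summable
    fun N => by
      rw [(hasSum_weights_mul
        (fun r s => summable_mul_max_neg (hA · r s) (hsum r s) (hpos r s) N) ϖ).tsum_eq]
      simpa [truncJumpMean] using hN N
  have hmean' : ∀ r s, Summable fun n : ℤ => A n r s * n := fun r s =>
    (summable_mul_left_iff (hϖ r).ne').1 <|
      (hmean.comp_injective (Prod.mk_left_injective (r, s))).congr fun n => mul_assoc _ _ _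
  rw [(hasSum_weights_mul hmean' ϖ).tsum_eq] at hnonneg
  exact (hdrift hmean').not_ge hnonneg

theorem truncAstar_one (N : ℕ) : truncAstar A N 1 = matA A := by
  simp only [truncAstar, matA, one_zpow, mul_one]

theorem AstarR_le_truncAstar (hA : ∀ k r s, 0 ≤ A k r s) (hsum : ∀ r s, Summable fun n => A n r s)
    {x : ℝ} (hx : 1 ≤ x) (hsumx : ∀ r s, Summable fun n => A n r s * x ^ n) (N : ℕ) (r s : Fin m) :
    AstarR A x r s ≤ truncAstar A N x r s :=
  (hsumx r s).tsum_le_tsum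
    (fun n => mul_le_mul_of_nonneg_left (zpow_le_zpow_right₀ hx (le_max_left _ _)) (hA n r s))
    (summable_mul_zpow_max (hA · r s) (hsum r s) (hsumx r s) hx N)

theorem eventually_subcritical_truncAstar (hA : ∀ k r s, 0 ≤ A k r s)
    (hphase : PhaseStochastic A) {R : ℝ} (hR : 1 < R)
    (hsumR : ∀ r s, Summable fun n => A n r s * R ^ n) {N : ℕ} {h : Fin m → ℝ}
    (hneg : ∀ j, (truncJumpMean A N *ᵥ 1 + matA A *ᵥ h - h) j < 0) :
    ∀ᶠ x in 𝓝[>] 1, Subcritical (truncAstar A N x) := by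
  have hone := truncAstar_one (A := A) N
  exact eventually_subcritical_of_hasDerivWithinAt
    (fun r s => hasDerivWithinAt_tsum_mul_zpow_max (hA · r s)
      (summable_of_phaseStochastic hphase r s) hR (hsumR r s) N)
    (hone ▸ (matA_mem_rowStochastic hA hphase).2) h (hone ▸ hneg)

theorem eventually_subcritical_AstarR (hA : ∀ k r s, 0 ≤ A k r s) (hphase : PhaseStochastic A)
    (hphaseirr : MatIrreducible (matA A)) (hP : Stochastic (P A B))
    (hirr : ChainIrreducible (P A B)) {pd : S m → ℝ} (hpd : IsStationary (P A B) pd)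
    {R : ℝ} (hR : 1 < R) (hsumR : ∀ r s, Summable fun n => A n r s * R ^ n) :
    ∀ᶠ x in 𝓝[>] 1, Subcritical (AstarR A x) := by
  have hsum := summable_of_phaseStochastic hphase
  obtain ⟨ϖ, hϖ, hpoisson⟩ :=
    exists_pos_weights_poisson (matA_mem_rowStochastic hA hphase) hphaseirr
  have hpos : ∀ r s, Summable fun n : ℤ => A n r s * max (n : ℝ) 0 := fun r s =>
    .of_nonneg_of_le (fun n => mul_nonneg (hA n r s) (le_max_right _ _))
      (fun n => mul_le_mul_of_nonneg_left (max_intCast_zero_le hR n) (hA n r s)) <|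
      ((hsumR r s).div_const (R - 1)).congr fun n => mul_div_assoc _ _ _
  obtain ⟨N, hN⟩ := exists_truncJumpMean_neg hA hsum hpos hϖ fun hmean => by
    obtain ⟨h, hh, hh'⟩ := hpoisson (jumpMean A *ᵥ 1)
    obtain ⟨j, hj⟩ := exists_drift_neg_of_isStationary hA hphase hP hirr hpd hmean hh
    exact hh' j ▸ hj
  obtain ⟨h, -, hh⟩ := hpoisson (truncJumpMean A N *ᵥ 1)
  filter_upwards [eventually_subcritical_truncAstar hA hphase hR hsumR fun j => (hh j).trans_lt hN,
    Ioc_mem_nhdsGT hR] with x hx hxR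
  exact hx.mono <| AstarR_le_truncAstar hA hsum hxR.1.le
    (fun r s => summable_mul_zpow_of_mem_Icc (hA · r s) (hsum r s) (hsumR r s)
      ⟨hxR.1.le, hxR.2⟩) N

theorem AstarR_nonneg (hA : ∀ k r s, 0 ≤ A k r s) {x : ℝ} (hx : 0 ≤ x) (r s : Fin m) :
    0 ≤ AstarR A x r s :=
  tsum_nonneg fun n => mul_nonneg (hA n r s) (zpow_nonneg hx n)

theorem norm_AstarC_le (hA : ∀ k r s, 0 ≤ A k r s) {z : ℂ} {r s : Fin m}
    (hsumz : Summable fun n => A n r s * ‖z‖ ^ n) : ‖AstarC A z r s‖ ≤ AstarR A ‖z‖ r s :=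
  tsum_of_norm_bounded hsumz.hasSum fun n => by simp [abs_of_nonneg (hA n r s)]

theorem AstarC_ofReal (x : ℝ) : AstarC A x = (AstarR A x).map Complex.ofReal := by
  ext r s
  simp [AstarC, AstarR, Complex.ofReal_tsum]

theorem det_one_sub_AstarC_ofReal (x : ℝ) : (1 - AstarC A x).det = ((1 - AstarR A x).det : ℝ) := by
  rw [AstarC_ofReal, ← Complex.ofRealHom_eq_coe, RingHom.map_det, RingHom.mapMatrix_apply,
    Matrix.map_sub _ (map_sub _), Matrix.map_one _ (map_zero _) (map_one _)]
  rfl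

theorem summable_mul_norm_zpow_of_mem_Omega (hA : ∀ k r s, 0 ≤ A k r s)
    (hphase : PhaseStochastic A) {z : ℂ} (hz : z ∈ Omega A) (r s : Fin m) :
    Summable fun n => A n r s * ‖z‖ ^ n := by
  have hradius : phiA A ≤ radius fun k => A (k + 1) r s :=
    iInf_le_of_le r (iInf_le (fun s => radius fun k => A (k + 1) r s) s)
  exact summable_mul_zpow_of_lt_radius (hA · r s) (summable_of_phaseStochastic hphase r s) hz.1.le
    (hz.2.1.trans_le hradius)

theorem not_subcritical_AstarR_norm_of_mem_Omega (hA : ∀ k r s, 0 ≤ A k r s)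
    (hphase : PhaseStochastic A) {z : ℂ} (hz : z ∈ Omega A) : ¬Subcritical (AstarR A ‖z‖) :=
  fun hsub => hsub.det_one_sub_ne_zero
    (fun r s => norm_AstarC_le hA (summable_mul_norm_zpow_of_mem_Omega hA hphase hz r s)) hz.2.2

theorem continuousOn_AstarR (hA : ∀ k r s, 0 ≤ A k r s) (hsum : ∀ r s, Summable fun n => A n r s)
    {R : ℝ} (hsumR : ∀ r s, Summable fun n => A n r s * R ^ n) :
    ContinuousOn (AstarR A) (Set.Icc 1 R) :=
  continuousOn_pi.2 fun r => continuousOn_pi.2 fun s =>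
    continuousOn_tsum_mul_zpow (hA · r s) (hsum r s) (hsumR r s)

end GeneratingMatrix

theorem omega_has_minimal_positive_real_general {m : ℕ} (A B : ℤ → Matrix (Fin m) (Fin m) ℝ)
    (hA0 : ∀ k r s, 0 ≤ A k r s) (hP : Stochastic (P A B)) (hirr : ChainIrreducible (P A B))
    (hphase : PhaseStochastic A) (hphaseirr : MatIrreducible (matA A))
    (pd : S m → ℝ) (hpd : IsStationary (P A B) pd) (hNe : (Omega A).Nonempty) :
    ∃ z0 : ℂ, z0 ∈ Omega A ∧ 0 < z0.re ∧ z0.im = 0 ∧ ∀ z ∈ Omega A, ‖z0‖ ≤ ‖z‖ := by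
  obtain ⟨w, hw⟩ := hNe
  have hsumw := summable_mul_norm_zpow_of_mem_Omega hA0 hphase hw
  obtain ⟨c, hc, hdet, hsub⟩ := exists_first_det_one_sub_eq_zero hw.1
    (fun x hx => AstarR_nonneg hA0 (zero_le_one.trans hx.1))
    (continuousOn_AstarR hA0 (summable_of_phaseStochastic hphase) hsumw)
    (eventually_subcritical_AstarR hA0 hphase hphaseirr hP hirr hpd hw.1 hsumw)
    (not_subcritical_AstarR_norm_of_mem_Omega hA0 hphase hw)
  have hc₀ : 0 < c := zero_lt_one.trans hc.1
  have hnorm : ‖(c : ℂ)‖ = c := Complex.norm_of_nonneg hc₀.le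
  refine ⟨c, ⟨?_, ?_, ?_⟩, hc₀, Complex.ofReal_im c, fun z hz => ?_⟩
  · exact hnorm.symm ▸ hc.1
  · exact (ENNReal.ofReal_le_ofReal (hnorm.trans_le hc.2)).trans_lt hw.2.1
  · rw [det_one_sub_AstarC_ofReal, hdet, Complex.ofReal_zero]
  · by_contra! hlt
    exact not_subcritical_AstarR_norm_of_mem_Omega hA0 hphase hz
      (hsub ‖z‖ ⟨hz.1, hlt.trans_eq hnorm⟩)

/-- For an irreducible, aperiodic, positive recurrent `GI/G/1`-type Markov
chain whose phase matrix `A` is stochastic: if `Ω = {z : 1 < |z| < φ_{A+}, det(I - A*(z)) = 0}`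
is nonempty, then it contains a positive real number `z₀` of minimal modulus. -/
theorem omega_has_minimal_positive_real {m : ℕ} (hm : 0 < m)
    (A B : ℤ → Matrix (Fin m) (Fin m) ℝ)
    (hA0 : ∀ k r s, 0 ≤ A k r s) (hB0 : ∀ k r s, 0 ≤ B k r s)
    (hP : Stochastic (P A B))
    (hirr : ChainIrreducible (P A B)) (hap : ChainAperiodic (P A B))
    (hphase : PhaseStochastic A) (hphaseirr : MatIrreducible (matA A))
    (pd : S m → ℝ) (hpd : IsStationary (P A B) pd)
    (hNe : (Omega A).Nonempty) :
    ∃ z0 : ℂ, z0 ∈ Omega A ∧ 0 < z0.re ∧ z0.im = 0 ∧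
      ∀ z ∈ Omega A, ‖z0‖ ≤ ‖z‖ :=
  omega_has_minimal_positive_real_general A B hA0 hP hirr hphase hphaseirr pd hpd hNe

end GIG1
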